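/- arXiv:1412.4198 — 4 statements merged into one kernel-verified Lean document; each statement's English description precedes it below -/
import Mathlib

section
/- Let A be a finite two-player zero-sum game with row set R and column set C. Let R1, R2, C1, C2 be nonempty sets with R1 ⊆ R2 ⊆ R and C1 ⊆ C2 ⊆ C, and suppose that R2 × C2 is a weak GSP of A. Then R1 × C1 is a weak GSP of A if and only if R1 × C1 is a weak GSP of the subgame A restricted to R2 × C2. -/
/-!
Weak domination is transitive and survives shrinking the set on which it is tested. A row outside
`R2` is dominated on `C2 ⊇ C1` by some row of `R2`, which in turn either lies in `R1` or is dominated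
on `C1` by a row of `R1`; so domination inside the subgame extends to the whole game. The converse
direction only restricts the set of dominated rows. Columns are symmetric, being the rows of the
game with negated transposed payoffs.
-/

/-- `R1` weakly dominates the set of rows `R2` with respect to the columns `C'`:
every row in `R2` is weakly dominated by some row in `R1`. -/
def RowsWeaklyDominate {R C : Type*} (a : R → C → ℝ) (C' : Finset C)
    (R1 R2 : Finset R) : Prop :=
  ∀ r2 ∈ R2, ∃ r1 ∈ R1, ∀ c ∈ C', a r2 c ≤ a r1 c

/-- `C1` weakly dominates the set of columns `C2` with respect to the rows `R'`. -/
def ColsWeaklyDominate {R C : Type*} (a : R → C → ℝ) (R' : Finset R)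
    (C1 C2 : Finset C) : Prop :=
  ∀ c2 ∈ C2, ∃ c1 ∈ C1, ∀ r ∈ R', a r c1 ≤ a r c2

/-- `R' × C'` is a weak generalized saddle point of the subgame of `a` with ambient
row set `Ra` and ambient column set `Ca`. -/
def IsWeakGSPIn {R C : Type*} [DecidableEq R] [DecidableEq C] (a : R → C → ℝ)
    (Ra : Finset R) (Ca : Finset C) (R' : Finset R) (C' : Finset C) : Prop :=
  R'.Nonempty ∧ C'.Nonempty ∧
  RowsWeaklyDominate a C' R' (Ra \ R') ∧
  ColsWeaklyDominate a R' C' (Ca \ C')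

/-- `R' × C'` is a weak generalized saddle point of the whole game `a`. -/
def IsWeakGSP {R C : Type*} [Fintype R] [Fintype C] [DecidableEq R] [DecidableEq C]
    (a : R → C → ℝ) (R' : Finset R) (C' : Finset C) : Prop :=
  IsWeakGSPIn a Finset.univ Finset.univ R' C'

/-- If `R2` dominates all remaining rows with respect to a larger column set, then dominating
`R2 \ R1` suffices for `R1` to dominate every row outside it. -/
theorem RowsWeaklyDominate.extend {R C : Type*} [Fintype R] [DecidableEq R]
    {a : R → C → ℝ} {R1 R2 : Finset R} {C1 C2 : Finset C} (hC12 : C1 ⊆ C2)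
    (h2 : RowsWeaklyDominate a C2 R2 (Finset.univ \ R2))
    (h1 : RowsWeaklyDominate a C1 R1 (R2 \ R1)) :
    RowsWeaklyDominate a C1 R1 (Finset.univ \ R1) := by
  intro r _
  obtain ⟨s, hs, hrs⟩ : ∃ s ∈ R2, ∀ c ∈ C1, a r c ≤ a s c := by
    by_cases hr : r ∈ R2
    · exact ⟨r, hr, fun _ _ => le_rfl⟩
    · obtain ⟨s, hs, h⟩ := h2 r (by simp [hr])
      exact ⟨s, hs, fun c hc => h c (hC12 hc)⟩
  by_cases hs1 : s ∈ R1
  · exact ⟨s, hs1, hrs⟩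
  · obtain ⟨t, ht, hst⟩ := h1 s (by simp [hs, hs1])
    exact ⟨t, ht, fun c hc => (hrs c hc).trans (hst c hc)⟩

/-- Column domination is row domination in the game with negated transposed payoffs. -/
theorem colsWeaklyDominate_iff_rows {R C : Type*} (a : R → C → ℝ) (R' : Finset R)
    (C1 C2 : Finset C) :
    ColsWeaklyDominate a R' C1 C2 ↔ RowsWeaklyDominate (fun c r => -a r c) R' C1 C2 := by
  simp [ColsWeaklyDominate, RowsWeaklyDominate]

theorem weakGSP_iff_weakGSP_of_subgame
    {R C : Type*} [Fintype R] [Fintype C] [Nonempty R] [Nonempty C]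
    [DecidableEq R] [DecidableEq C]
    (a : R → C → ℝ) (R1 R2 : Finset R) (C1 C2 : Finset C)
    (hR1 : R1.Nonempty) (hC1 : C1.Nonempty)
    (hR12 : R1 ⊆ R2) (hC12 : C1 ⊆ C2)
    (hGSP2 : IsWeakGSP a R2 C2) :
    IsWeakGSP a R1 C1 ↔ IsWeakGSPIn a R2 C2 R1 C1 := by
  obtain ⟨-, -, hrow2, hcol2⟩ := hGSP2
  constructor
  · rintro ⟨-, -, hrow, hcol⟩
    exact ⟨hR1, hC1,
      fun r hr => hrow r (Finset.sdiff_subset_sdiff (Finset.subset_univ _) subset_rfl hr),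
      fun c hc => hcol c (Finset.sdiff_subset_sdiff (Finset.subset_univ _) subset_rfl hc)⟩
  · rintro ⟨-, -, hrow, hcol⟩
    refine ⟨hR1, hC1, hrow2.extend hC12 hrow, ?_⟩
    rw [colsWeaklyDominate_iff_rows] at hcol hcol2 ⊢
    exact hcol2.extend hR12 hcol
end

section
/- Every finite two-player zero-sum game contains a unique strict saddle; that is, there exists exactly one product R' × C' of nonempty subsets of rows and columns that is a strict saddle. -/
/-!
Strict GSPs are closed under intersection. Since there are finitely many products and the whole
game is a strict GSP, a minimal strict GSP exists; two strict saddles both contain the strict GSP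
formed by their intersection, so they coincide with it and hence with each other.

Let `R₁ × C₁` and `R₂ × C₂` be strict GSPs. If `C₁ ∩ C₂` contains a column `c₀`, then, for every
row `r` outside `R₁ ∩ R₂`, among the rows dominating `r` on `C₁ ∩ C₂` one with maximal entry in
column `c₀` lies in `R₁ ∩ R₂` (`IsStrictGSP.rows_inter`), and in the same way `R₁ ∩ R₂` is nonempty
(`IsStrictGSP.rows_inter_nonempty`). The statements for columns follow by passing to the
game with the players exchanged (`IsStrictGSP.swap`).

It remains to exclude that both `R₁ ∩ R₂` and `C₁ ∩ C₂` are empty (`IsStrictGSP.not_disjoint`).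
In that case, dominating back and forth yields self-maps `F` of `R₂` and `G` of `C₂` with
`a r (G c) < a (F r) c`. By the pigeonhole principle there are `r`, `c` and `N > 0` with
`F^N r = r` and `G^N c = c`, and then `a r c = a r (G^N c) < a (F^N r) c = a r c`.
-/

/-- `R1` strictly dominates the set of rows `R2` with respect to the columns `C'`:
every row in `R2` is strictly dominated by some row in `R1`. -/
def RowsStrictlyDominate {R C : Type*} (a : R → C → ℝ) (C' : Finset C)
    (R1 R2 : Finset R) : Prop :=
  ∀ r2 ∈ R2, ∃ r1 ∈ R1, ∀ c ∈ C', a r2 c < a r1 c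

/-- `C1` strictly dominates the set of columns `C2` with respect to the rows `R'`. -/
def ColsStrictlyDominate {R C : Type*} (a : R → C → ℝ) (R' : Finset R)
    (C1 C2 : Finset C) : Prop :=
  ∀ c2 ∈ C2, ∃ c1 ∈ C1, ∀ r ∈ R', a r c1 < a r c2

/-- `R' × C'` is a strict generalized saddle point of the game `a`. -/
def IsStrictGSP {R C : Type*} [Fintype R] [Fintype C] [DecidableEq R] [DecidableEq C]
    (a : R → C → ℝ) (R' : Finset R) (C' : Finset C) : Prop :=
  R'.Nonempty ∧ C'.Nonempty ∧
  RowsStrictlyDominate a C' R' (Finset.univ \ R') ∧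
  ColsStrictlyDominate a R' C' (Finset.univ \ C')

/-- `R' × C'` is a strict saddle: a strict GSP none of whose proper (nonempty)
subproducts is a strict GSP. -/
def IsStrictSaddle {R C : Type*} [Fintype R] [Fintype C] [DecidableEq R] [DecidableEq C]
    (a : R → C → ℝ) (R' : Finset R) (C' : Finset C) : Prop :=
  IsStrictGSP a R' C' ∧
  ∀ R'' C'', R'' ⊆ R' → C'' ⊆ C' → IsStrictGSP a R'' C'' → R'' = R' ∧ C'' = C'

section

variable {R C : Type*} [Fintype R] [Fintype C] [DecidableEq R] [DecidableEq C]
  {a : R → C → ℝ} {R₁ R₂ : Finset R} {C₁ C₂ : Finset C}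

/-- Exchanging the players turns the payoff matrix `a` into its negative transpose. -/
lemma IsStrictGSP.swap (h : IsStrictGSP a R₁ C₁) :
    IsStrictGSP (fun c r => -a r c) C₁ R₁ := by
  obtain ⟨hR, hC, h1, h2⟩ := h
  refine ⟨hC, hR, fun c hc => ?_, fun r hr => ?_⟩
  · obtain ⟨c', hc', h⟩ := h2 c hc
    exact ⟨c', hc', fun r hr => neg_lt_neg (h r hr)⟩
  · obtain ⟨r', hr', h⟩ := h1 r hr
    exact ⟨r', hr', fun c hc => neg_lt_neg (h c hc)⟩

lemma IsStrictGSP.exists_row (h : IsStrictGSP a R₁ C₁) {r : R} (hr : r ∉ R₁) :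
    ∃ r' ∈ R₁, ∀ c ∈ C₁, a r c < a r' c :=
  h.2.2.1 r (by simp [hr])

lemma IsStrictGSP.exists_col (h : IsStrictGSP a R₁ C₁) {c : C} (hc : c ∉ C₁) :
    ∃ c' ∈ C₁, ∀ r ∈ R₁, a r c' < a r c :=
  h.2.2.2 c (by simp [hc])

lemma IsStrictGSP.rows_inter_nonempty (h₁ : IsStrictGSP a R₁ C₁) (h₂ : IsStrictGSP a R₂ C₂)
    (hC : (C₁ ∩ C₂).Nonempty) : (R₁ ∩ R₂).Nonempty := by
  obtain ⟨c, hc⟩ := hC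
  rw [Finset.mem_inter] at hc
  -- A row with maximal entry in a common column is undominated, so it lies in both `R₁` and `R₂`.
  obtain ⟨r, -, hr⟩ := Finset.exists_max_image Finset.univ (fun r => a r c)
    (h₁.1.mono (Finset.subset_univ _))
  refine ⟨r, Finset.mem_inter.2 ⟨?_, ?_⟩⟩
  · by_contra hn
    obtain ⟨r', -, h⟩ := h₁.exists_row hn
    exact absurd (h c hc.1) (hr r' (Finset.mem_univ _)).not_gt
  · by_contra hn
    obtain ⟨r', -, h⟩ := h₂.exists_row hn
    exact absurd (h c hc.2) (hr r' (Finset.mem_univ _)).not_gt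

lemma IsStrictGSP.rows_inter (h₁ : IsStrictGSP a R₁ C₁) (h₂ : IsStrictGSP a R₂ C₂)
    (hC : (C₁ ∩ C₂).Nonempty) :
    RowsStrictlyDominate a (C₁ ∩ C₂) (R₁ ∩ R₂) (Finset.univ \ (R₁ ∩ R₂)) := by
  classical
  intro r hr
  obtain ⟨c₀, hc₀⟩ := hC
  -- A row that is not in `R₁ ∩ R₂` is dominated on the common columns by some row.
  have step : ∀ s ∉ R₁ ∩ R₂, ∃ s', ∀ c ∈ C₁ ∩ C₂, a s c < a s' c := by
    intro s hs
    by_cases h : s ∈ R₁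
    · obtain ⟨s', -, h'⟩ := h₂.exists_row (r := s) (fun h' => hs (Finset.mem_inter.2 ⟨h, h'⟩))
      exact ⟨s', fun c hc => h' c (Finset.mem_inter.1 hc).2⟩
    · obtain ⟨s', -, h'⟩ := h₁.exists_row h
      exact ⟨s', fun c hc => h' c (Finset.mem_inter.1 hc).1⟩
  have hr' : r ∉ R₁ ∩ R₂ := (Finset.mem_sdiff.1 hr).2
  obtain ⟨s₀, hs₀⟩ := step r hr'
  obtain ⟨s, hs, hmax⟩ := Finset.exists_max_image
    (Finset.univ.filter fun s => ∀ c ∈ C₁ ∩ C₂, a r c < a s c) (fun s => a s c₀)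
    ⟨s₀, Finset.mem_filter.2 ⟨Finset.mem_univ _, hs₀⟩⟩
  have hs' := (Finset.mem_filter.1 hs).2
  refine ⟨s, ?_, hs'⟩
  by_contra hn
  obtain ⟨t, ht⟩ := step s hn
  exact absurd (ht c₀ hc₀) (hmax t (Finset.mem_filter.2
    ⟨Finset.mem_univ _, fun c hc => (hs' c hc).trans (ht c hc)⟩)).not_gt

lemma IsStrictGSP.not_disjoint (h₁ : IsStrictGSP a R₁ C₁) (h₂ : IsStrictGSP a R₂ C₂)
    (hR : Disjoint R₁ R₂) (hC : Disjoint C₁ C₂) : False := by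
  have hF : ∀ r : R₂, ∃ r₁ : R₁, ∃ r' : R₂,
      (∀ c ∈ C₁, a r c < a r₁ c) ∧ ∀ c ∈ C₂, a r₁ c < a r' c := by
    rintro ⟨r, hr⟩
    obtain ⟨r₁, hr₁, h⟩ := h₁.exists_row (Finset.disjoint_right.1 hR hr)
    obtain ⟨r', hr', h'⟩ := h₂.exists_row (Finset.disjoint_left.1 hR hr₁)
    exact ⟨⟨r₁, hr₁⟩, ⟨r', hr'⟩, h, h'⟩
  have hG : ∀ c : C₂, ∃ c₁ : C₁, ∃ c' : C₂,
      (∀ r ∈ R₁, a r c₁ < a r c) ∧ ∀ r ∈ R₂, a r c' < a r c₁ := by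
    rintro ⟨c, hc⟩
    obtain ⟨c₁, hc₁, h⟩ := h₁.exists_col (Finset.disjoint_right.1 hC hc)
    obtain ⟨c', hc', h'⟩ := h₂.exists_col (Finset.disjoint_left.1 hC hc₁)
    exact ⟨⟨c₁, hc₁⟩, ⟨c', hc'⟩, h, h'⟩
  choose f F hf hF using hF
  choose g G hg hG using hG
  have key : ∀ (r : R₂) (c : C₂), a r (G c) < a (F r) c := fun r c =>
    calc a r (G c) < a r (g c) := hG c r r.2
      _ < a (f r) (g c) := hf r (g c) (g c).2
      _ < a (f r) c := hg c (f r) (f r).2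
      _ < a (F r) c := hF r c c.2
  have iter : ∀ (n : ℕ) (r : R₂) (c : C₂), a r (G^[n + 1] c) < a (F^[n + 1] r) c := by
    intro n
    induction n with
    | zero => exact key
    | succ n ih =>
      intro r c
      rw [Function.iterate_succ_apply' G, Function.iterate_succ_apply F]
      exact (key r _).trans (ih (F r) c)
  obtain ⟨r₀, hr₀⟩ := h₂.1
  obtain ⟨c₀, hc₀⟩ := h₂.2.1
  -- The joint orbit lives in a finite set, so it returns to some pair after `k + 1` steps.
  obtain ⟨i, j, hij, h⟩ := Finite.exists_ne_map_eq_of_infinite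
    (fun n : ℕ => (F^[n] ⟨r₀, hr₀⟩, G^[n] ⟨c₀, hc₀⟩))
  wlog hlt : i < j generalizing i j
  · exact this j i hij.symm h.symm (by omega)
  obtain ⟨k, rfl⟩ : ∃ k, j = k + 1 + i := ⟨j - i - 1, by omega⟩
  simp only [Prod.mk.injEq, Function.iterate_add_apply _ (k + 1) i] at h
  have := iter k (F^[i] ⟨r₀, hr₀⟩) (G^[i] ⟨c₀, hc₀⟩)
  rw [← h.1, ← h.2] at this
  exact lt_irrefl _ this

lemma IsStrictGSP.inter (h₁ : IsStrictGSP a R₁ C₁) (h₂ : IsStrictGSP a R₂ C₂) :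
    IsStrictGSP a (R₁ ∩ R₂) (C₁ ∩ C₂) := by
  have hne : (R₁ ∩ R₂).Nonempty ∧ (C₁ ∩ C₂).Nonempty := by
    by_cases hC : (C₁ ∩ C₂).Nonempty
    · exact ⟨h₁.rows_inter_nonempty h₂ hC, hC⟩
    · by_cases hR : (R₁ ∩ R₂).Nonempty
      · exact ⟨hR, h₁.swap.rows_inter_nonempty h₂.swap hR⟩
      · rw [Finset.not_nonempty_iff_eq_empty, ← Finset.disjoint_iff_inter_eq_empty] at hC hR
        exact (h₁.not_disjoint h₂ hR hC).elim
  refine ⟨hne.1, hne.2, h₁.rows_inter h₂ hne.2, fun c hc => ?_⟩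
  obtain ⟨c', hc', h⟩ := h₁.swap.rows_inter h₂.swap hne.1 c hc
  exact ⟨c', hc', fun r hr => neg_lt_neg_iff.1 (h r hr)⟩

end

theorem exists_unique_strictSaddle
    {R C : Type*} [Fintype R] [Fintype C] [Nonempty R] [Nonempty C]
    [DecidableEq R] [DecidableEq C] (a : R → C → ℝ) :
    ∃! p : Finset R × Finset C, IsStrictSaddle a p.1 p.2 := by
  have huniv : IsStrictGSP a Finset.univ Finset.univ :=
    ⟨Finset.univ_nonempty, Finset.univ_nonempty, by simp [RowsStrictlyDominate],
      by simp [ColsStrictlyDominate]⟩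
  obtain ⟨p, hp⟩ := (Set.toFinite {p : Finset R × Finset C | IsStrictGSP a p.1 p.2}).exists_minimal
    ⟨(Finset.univ, Finset.univ), huniv⟩
  refine ⟨p, ⟨hp.prop, fun R'' C'' hR hC h => ?_⟩, fun q hq => ?_⟩
  · have hle : p ≤ (R'', C'') := hp.le_of_le h ⟨hR, hC⟩
    exact ⟨hR.antisymm hle.1, hC.antisymm hle.2⟩
  · have hi : IsStrictGSP a (q.1 ∩ p.1) (q.2 ∩ p.2) := hq.1.inter hp.prop
    have hle : p ≤ (q.1 ∩ p.1, q.2 ∩ p.2) :=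
      hp.le_of_le hi ⟨Finset.inter_subset_right, Finset.inter_subset_right⟩
    obtain ⟨e₁, e₂⟩ := hq.2 p.1 p.2 (hle.1.trans Finset.inter_subset_left)
      (hle.2.trans Finset.inter_subset_left) hp.prop
    exact (Prod.ext e₁ e₂).symm
end

section
/- Let A be a finite two-player zero-sum game with row set R and column set C, and let R1 × C1 and R2 × C2 be strict GSPs of A such that R1 ∩ R2 ≠ ∅ and C1 ∩ C2 ≠ ∅. Then (R1 ∩ R2) × (C1 ∩ C2) is a strict GSP of A (strict GSPs are closed under non-empty intersection). -/
/-- Nonemptiness of `C1 ∩ C2` is what makes strict domination irreflexive. -/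
lemma rows_inter {R C : Type*} [Fintype R] [DecidableEq R] [DecidableEq C]
    (a : R → C → ℝ) (R1 R2 : Finset R) (C1 C2 : Finset C)
    (h1 : RowsStrictlyDominate a C1 R1 (Finset.univ \ R1))
    (h2 : RowsStrictlyDominate a C2 R2 (Finset.univ \ R2))
    (hC : (C1 ∩ C2).Nonempty) :
    RowsStrictlyDominate a (C1 ∩ C2) (R1 ∩ R2) (Finset.univ \ (R1 ∩ R2)) := by
  classical
  have step : ∀ r, r ∉ R1 ∩ R2 → ∃ s, ∀ c ∈ C1 ∩ C2, a r c < a s c := by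
    intro r hr
    by_cases hr1 : r ∈ R1
    · have hr2 : r ∉ R2 := fun h => hr (Finset.mem_inter.2 ⟨hr1, h⟩)
      obtain ⟨s, -, hs⟩ := h2 r (by simp [hr2])
      exact ⟨s, fun c hc => hs c (Finset.mem_inter.1 hc).2⟩
    · obtain ⟨s, -, hs⟩ := h1 r (by simp [hr1])
      exact ⟨s, fun c hc => hs c (Finset.mem_inter.1 hc).1⟩
  intro r hr
  obtain ⟨c₀, hc₀⟩ := hC
  obtain ⟨s, hs⟩ := step r (by simpa using hr)
  -- Maximizing the payoff in the single column `c₀` already yields a maximal dominating row.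
  obtain ⟨m, hm, hmax⟩ := Finset.exists_max_image
    (Finset.univ.filter fun t => ∀ c ∈ C1 ∩ C2, a r c < a t c) (fun t => a t c₀)
    ⟨s, Finset.mem_filter.2 ⟨Finset.mem_univ _, hs⟩⟩
  have hm' := (Finset.mem_filter.1 hm).2
  refine ⟨m, ?_, hm'⟩
  by_contra hmem
  obtain ⟨t, ht⟩ := step m hmem
  exact (hmax t (Finset.mem_filter.2
    ⟨Finset.mem_univ _, fun c hc => (hm' c hc).trans (ht c hc)⟩)).not_gt (ht c₀ hc₀)

/-- Exchanging the players turns column domination into row domination. -/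
lemma cols_iff_rows {R C : Type*} (a : R → C → ℝ) (R' : Finset R) (C1 C2 : Finset C) :
    ColsStrictlyDominate a R' C1 C2 ↔ RowsStrictlyDominate (fun c r => -a r c) R' C1 C2 := by
  simp [ColsStrictlyDominate, RowsStrictlyDominate]

theorem strictGSP_inter
    {R C : Type*} [Fintype R] [Fintype C] [Nonempty R] [Nonempty C]
    [DecidableEq R] [DecidableEq C]
    (a : R → C → ℝ) (R1 R2 : Finset R) (C1 C2 : Finset C)
    (h1 : IsStrictGSP a R1 C1) (h2 : IsStrictGSP a R2 C2)
    (hR : (R1 ∩ R2).Nonempty) (hC : (C1 ∩ C2).Nonempty) :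
    IsStrictGSP a (R1 ∩ R2) (C1 ∩ C2) := by
  obtain ⟨-, -, hr1, hc1⟩ := h1
  obtain ⟨-, -, hr2, hc2⟩ := h2
  rw [cols_iff_rows] at hc1 hc2
  refine ⟨hR, hC, rows_inter a R1 R2 C1 C2 hr1 hr2 hC, ?_⟩
  rw [cols_iff_rows]
  exact rows_inter _ C1 C2 R1 R2 hc1 hc2 hR
end

section
/- Let A be a finite two-player zero-sum game with row set R and column set C, and let R1 × C1 and R2 × C2 be strict saddles of A. Then R1 ∩ R2 ≠ ∅ and C1 ∩ C2 ≠ ∅; that is, any two strict saddles have intersecting row sets and intersecting column sets. -/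
/-- The combinatorial core: on finite sets, no pair of self-maps `ρ`, `π` can satisfy
`b x (π y) < b (ρ x) y` throughout, because `ρ × π` has a periodic point. -/
lemma not_forall_lt_of_selfMaps {α β : Type*} [Finite α] [Finite β] [Nonempty α] [Nonempty β]
    (b : α → β → ℝ) (ρ : α → α) (π : β → β) (h : ∀ x y, b x (π y) < b (ρ x) y) : False := by
  have hiter : ∀ n x y, b x (π^[n + 1] y) < b (ρ^[n + 1] x) y := by
    intro n
    induction n with
    | zero => intro x y; simpa using h x y
    | succ n ih =>
      intro x y
      rw [Function.iterate_succ_apply' π, Function.iterate_succ_apply ρ]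
      exact (h x _).trans (ih (ρ x) y)
  obtain ⟨x₀⟩ := ‹Nonempty α›
  obtain ⟨y₀⟩ := ‹Nonempty β›
  obtain ⟨m, n, hmn, heq⟩ : ∃ m n : ℕ, m < n ∧ (ρ^[m] x₀, π^[m] y₀) = (ρ^[n] x₀, π^[n] y₀) := by
    obtain ⟨m, n, hne, heq⟩ :=
      Finite.exists_ne_map_eq_of_infinite fun k : ℕ => (ρ^[k] x₀, π^[k] y₀)
    rcases lt_or_gt_of_ne hne with hlt | hlt
    · exact ⟨m, n, hlt, heq⟩
    · exact ⟨n, m, hlt, heq.symm⟩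
  obtain ⟨k, rfl⟩ := Nat.exists_eq_add_of_lt hmn
  rw [Prod.mk.injEq, show m + k + 1 = (k + 1) + m by omega,
    Function.iterate_add_apply ρ (k + 1) m, Function.iterate_add_apply π (k + 1) m] at heq
  have hlt := hiter k (ρ^[m] x₀) (π^[m] y₀)
  rw [← heq.1, ← heq.2] at hlt
  exact lt_irrefl _ hlt

section Domination

variable {R C : Type*} [Fintype R] [Fintype C] [DecidableEq R] [DecidableEq C]
  {a : R → C → ℝ} {R1 R2 : Finset R} {C1 C2 : Finset C}

lemma IsStrictGSP.exists_row_map (h1 : IsStrictGSP a R1 C1) (hR : Disjoint R1 R2) :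
    ∃ f : R2 → R1, ∀ r : R2, ∀ c ∈ C1, a r c < a (f r) c := by
  have h : ∀ r : R2, ∃ s : R1, ∀ c ∈ C1, a r c < a s c := by
    rintro ⟨r, hr⟩
    obtain ⟨s, hs, hlt⟩ := h1.2.2.1 r (by simpa using Finset.disjoint_right.mp hR hr)
    exact ⟨⟨s, hs⟩, hlt⟩
  choose f hf using h
  exact ⟨f, hf⟩

lemma IsStrictGSP.exists_col_map (h1 : IsStrictGSP a R1 C1) (hC : Disjoint C1 C2) :
    ∃ f : C2 → C1, ∀ c : C2, ∀ r ∈ R1, a r (f c) < a r c := by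
  have h : ∀ c : C2, ∃ d : C1, ∀ r ∈ R1, a r d < a r c := by
    rintro ⟨c, hc⟩
    obtain ⟨d, hd, hlt⟩ := h1.2.2.2 c (by simpa using Finset.disjoint_right.mp hC hc)
    exact ⟨⟨d, hd⟩, hlt⟩
  choose f hf using h
  exact ⟨f, hf⟩

lemma IsStrictGSP.not_disjoint_cols_of_disjoint_rows (h1 : IsStrictGSP a R1 C1)
    (h2 : IsStrictGSP a R2 C2) (hR : Disjoint R1 R2) (hC : Disjoint C1 C2) : False := by
  obtain ⟨f, hf⟩ := h1.exists_row_map hR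
  obtain ⟨g, hg⟩ := h2.exists_row_map hR.symm
  obtain ⟨φ, hφ⟩ := h1.exists_col_map hC
  obtain ⟨ψ, hψ⟩ := h2.exists_col_map hC.symm
  have := h2.1.to_subtype
  have := h1.2.1.to_subtype
  refine not_forall_lt_of_selfMaps (fun (r : R2) (c : C1) => a r c) (g ∘ f) (φ ∘ ψ) fun r c => ?_
  calc a r (φ (ψ c)) < a (f r) (φ (ψ c)) := hf r _ (φ (ψ c)).2
    _ < a (f r) (ψ c) := hφ (ψ c) _ (f r).2
    _ < a (g (f r)) (ψ c) := hg (f r) _ (ψ c).2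
    _ < a (g (f r)) c := hψ c _ (g (f r)).2

lemma IsStrictGSP.disjoint_cols_of_disjoint_rows (h1 : IsStrictGSP a R1 C1)
    (h2 : IsStrictGSP a R2 C2) (hR : Disjoint R1 R2) : Disjoint C1 C2 := by
  obtain ⟨f, hf⟩ := h1.exists_row_map hR
  obtain ⟨g, hg⟩ := h2.exists_row_map hR.symm
  have := h2.1.to_subtype
  refine Finset.disjoint_left.mpr fun c hc1 hc2 => ?_
  exact not_forall_lt_of_selfMaps (fun (r : R2) (_ : Unit) => a r c) (g ∘ f) id
    fun r _ => (hf r c hc1).trans (hg (f r) c hc2)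

lemma IsStrictGSP.disjoint_rows_of_disjoint_cols (h1 : IsStrictGSP a R1 C1)
    (h2 : IsStrictGSP a R2 C2) (hC : Disjoint C1 C2) : Disjoint R1 R2 := by
  obtain ⟨φ, hφ⟩ := h1.exists_col_map hC
  obtain ⟨ψ, hψ⟩ := h2.exists_col_map hC.symm
  have := h1.2.1.to_subtype
  refine Finset.disjoint_left.mpr fun r hr1 hr2 => ?_
  exact not_forall_lt_of_selfMaps (fun (_ : Unit) (c : C1) => a r c) id (φ ∘ ψ)
    fun _ c => (hφ (ψ c) r hr1).trans (hψ c r hr2)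

end Domination

theorem strictSaddles_intersect
    {R C : Type*} [Fintype R] [Fintype C] [Nonempty R] [Nonempty C]
    [DecidableEq R] [DecidableEq C]
    (a : R → C → ℝ) (R1 R2 : Finset R) (C1 C2 : Finset C)
    (h1 : IsStrictSaddle a R1 C1) (h2 : IsStrictSaddle a R2 C2) :
    (R1 ∩ R2).Nonempty ∧ (C1 ∩ C2).Nonempty := by
  rw [← Finset.not_disjoint_iff_nonempty_inter, ← Finset.not_disjoint_iff_nonempty_inter]
  refine ⟨fun hR => ?_, fun hC => ?_⟩
  · exact h1.1.not_disjoint_cols_of_disjoint_rows h2.1 hR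
      (h1.1.disjoint_cols_of_disjoint_rows h2.1 hR)
  · exact h1.1.not_disjoint_cols_of_disjoint_rows h2.1
      (h1.1.disjoint_rows_of_disjoint_cols h2.1 hC) hC
end
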